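/- arXiv:2301.13203 — 6 statements merged into one kernel-verified Lean document; each statement's English description precedes it below -/
import Mathlib

section
/- For every μ ∈ V_n and every Hermitian operator A ∈ End(ℂ^n), one has tr(M_μ A) = 2⟨A.μ, μ⟩; in particular ⟨A.μ, μ⟩ is a real number for Hermitian A. -/
/-!
Everything reduces to two sums over the standard orthonormal basis. By Parseval,
`innV f g = ∑ i j, ⟪g e_i e_j, f e_i e_j⟫` (`innV_eq`), while the trace of an operator `T` is
`∑ j, ⟪e_j, T e_j⟫`. Moving adjoints across the inner product, and using cyclicity of the trace
for the summands `L L* A`, the three families of terms in `tr (M_μ A)` become the three terms of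
`2 ⟨A.μ, μ⟩` (`trace_Mmap_comp`); this identity holds for every `A`.

If `A` is Hermitian then, `M_μ` being Hermitian as well, the complex conjugate of `tr (M_μ A)` is
`tr ((M_μ A)*) = tr (A M_μ) = tr (M_μ A)`, so `⟨A.μ, μ⟩` is real.
-/

open scoped InnerProductSpace ComplexOrder
open LinearMap

noncomputable section

abbrev E (n : ℕ) := EuclideanSpace ℂ (Fin n)

abbrev Vb (n : ℕ) := E n →ₗ[ℂ] E n →ₗ[ℂ] E n

def e (n : ℕ) (i : Fin n) : E n := EuclideanSpace.single i 1

def Lop {n : ℕ} (μ : Vb n) (X : E n) : E n →ₗ[ℂ] E n := μ X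

def Rop {n : ℕ} (μ : Vb n) (X : E n) : E n →ₗ[ℂ] E n := μ.flip X

def Mmap {n : ℕ} (μ : Vb n) : E n →ₗ[ℂ] E n :=
  (2 : ℂ) • ∑ i, Lop μ (e n i) ∘ₗ adjoint (Lop μ (e n i))
  - (2 : ℂ) • ∑ i, adjoint (Lop μ (e n i)) ∘ₗ Lop μ (e n i)
  - (2 : ℂ) • ∑ i, adjoint (Rop μ (e n i)) ∘ₗ Rop μ (e n i)

/-- The action `A.μ` of an endomorphism on a bilinear map (as a plain function):
`(A.μ)(X,Y) = A μ(X,Y) − μ(AX,Y) − μ(X,AY)`. -/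
def actF {n : ℕ} (A : E n →ₗ[ℂ] E n) (μ : Vb n) : E n → E n → E n :=
  fun X Y => A (μ X Y) - μ (A X) Y - μ X (A Y)

/-- The Hermitian inner product on `V_n`:
`⟨f,g⟩ = Σ_{i,j,k} ⟨f(e_i,e_j),e_k⟩ · conj(⟨g(e_i,e_j),e_k⟩)`,
where `⟨·,·⟩` on `ℂ^n` is ℂ-linear in its first slot. -/
def innV {n : ℕ} (f g : E n → E n → E n) : ℂ :=
  ∑ i, ∑ j, ∑ k, (⟪e n k, f (e n i) (e n j)⟫_ℂ : ℂ)
    * (starRingEnd ℂ) (⟪e n k, g (e n i) (e n j)⟫_ℂ : ℂ)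

/-- The vectors `e n i` as an orthonormal basis. -/
def eBasis (n : ℕ) : OrthonormalBasis (Fin n) ℂ (E n) := EuclideanSpace.basisFun (Fin n) ℂ

lemma eBasis_apply (n : ℕ) (i : Fin n) : eBasis n i = e n i := by
  simp [eBasis, e]

lemma trace_eq_sum {n : ℕ} (T : E n →ₗ[ℂ] E n) :
    LinearMap.trace ℂ (E n) T = ∑ j, ⟪e n j, T (e n j)⟫_ℂ := by
  simp only [LinearMap.trace_eq_sum_inner T (eBasis n), eBasis_apply]

lemma innV_eq {n : ℕ} (f g : E n → E n → E n) :
    innV f g = ∑ i, ∑ j, ⟪g (e n i) (e n j), f (e n i) (e n j)⟫_ℂ := by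
  unfold innV
  refine Finset.sum_congr rfl fun i _ => Finset.sum_congr rfl fun j _ => ?_
  rw [← (eBasis n).sum_inner_mul_inner]
  refine Finset.sum_congr rfl fun k _ => ?_
  rw [eBasis_apply, inner_conj_symm, mul_comm]

lemma trace_adjoint {n : ℕ} (T : E n →ₗ[ℂ] E n) :
    LinearMap.trace ℂ (E n) (adjoint T) = starRingEnd ℂ (LinearMap.trace ℂ (E n) T) := by
  simp only [trace_eq_sum, map_sum, inner_conj_symm, adjoint_inner_right]

lemma adjoint_Mmap {n : ℕ} (μ : Vb n) : adjoint (Mmap μ) = Mmap μ := by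
  simp only [Mmap, map_sub, map_smulₛₗ, map_sum, adjoint_comp, adjoint_adjoint, map_ofNat]

lemma trace_adjoint_comp_self_comp {n : ℕ} (T A : E n →ₗ[ℂ] E n) :
    LinearMap.trace ℂ (E n) ((adjoint T ∘ₗ T) ∘ₗ A) = ∑ j, ⟪T (e n j), T (A (e n j))⟫_ℂ := by
  simp only [trace_eq_sum, comp_apply, adjoint_inner_right]

lemma trace_self_comp_adjoint_comp {n : ℕ} (T A : E n →ₗ[ℂ] E n) :
    LinearMap.trace ℂ (E n) ((T ∘ₗ adjoint T) ∘ₗ A) = ∑ j, ⟪T (e n j), A (T (e n j))⟫_ℂ := by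
  rw [comp_assoc, LinearMap.trace_comp_comm']
  simp only [trace_eq_sum, comp_apply, adjoint_inner_right]

lemma sum_comp_right {n : ℕ} (T : Fin n → E n →ₗ[ℂ] E n) (A : E n →ₗ[ℂ] E n) :
    (∑ i, T i) ∘ₗ A = ∑ i, T i ∘ₗ A := by
  ext1 x
  simp

/-- The trace identity, valid for an arbitrary endomorphism `A`. -/
lemma trace_Mmap_comp {n : ℕ} (μ : Vb n) (A : E n →ₗ[ℂ] E n) :
    LinearMap.trace ℂ (E n) (Mmap μ ∘ₗ A) = 2 * innV (actF A μ) (fun X Y => μ X Y) := by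
  have hR : ∑ i, ∑ j, ⟪μ (e n j) (e n i), μ (A (e n j)) (e n i)⟫_ℂ
      = ∑ i, ∑ j, ⟪μ (e n i) (e n j), μ (A (e n i)) (e n j)⟫_ℂ := Finset.sum_comm
  simp only [Mmap, sub_comp, smul_comp, sum_comp_right, map_sub, map_smul, map_sum,
    trace_adjoint_comp_self_comp, trace_self_comp_adjoint_comp, innV_eq, actF, inner_sub_right,
    Finset.sum_sub_distrib, Lop, Rop, flip_apply, smul_eq_mul, hR]
  ring

/-- For every `μ ∈ V_n` and Hermitian `A`, `tr(M_μ A) = 2⟨A.μ, μ⟩`;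
in particular `⟨A.μ, μ⟩` is real. -/
theorem trace_Mmap_mul {n : ℕ} (μ : Vb n) (A : E n →ₗ[ℂ] E n)
    (hA : adjoint A = A) :
    LinearMap.trace ℂ (E n) (Mmap μ ∘ₗ A)
      = 2 * innV (actF A μ) (fun X Y => μ X Y) ∧
    (innV (actF A μ) (fun X Y => μ X Y)).im = 0 := by
  refine ⟨trace_Mmap_comp μ A, ?_⟩
  have h := trace_adjoint (Mmap μ ∘ₗ A)
  rw [adjoint_comp, hA, adjoint_Mmap, LinearMap.trace_comp_comm', trace_Mmap_comp] at h
  have h2 := Complex.conj_eq_iff_im.mp h.symm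
  simpa using h2
end
end

section
/- Let 0 ≠ μ ∈ V_n and suppose M_μ = c·I + D for some c ∈ ℝ and some D ∈ Der(μ). If tr(D) ≠ 0, then c = −tr(D²)/tr(D) and tr(D) > 0. -/
/-!
Pairing `M_μ` with an endomorphism `A` in the trace form gives `2⟨A.μ, μ⟩`, so `tr(M_μ A) = 0`
for every derivation `A` (`trace_Mmap_comp_of_isDer`). With `A = D` and `M_μ = cI + D` this reads
`c tr D + tr D² = 0`, which is the formula for `c`.

For the sign, `tr M_μ = -2‖μ‖²` gives `n c + tr D = -2‖μ‖²`. Multiplying by `tr D` and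
eliminating `c` yields `2‖μ‖² tr D = n tr D² - (tr D)²`. Since `D = M_μ - cI` is Hermitian,
`tr D` is real and the right-hand side is nonnegative by Cauchy–Schwarz; as `‖μ‖² > 0`, it
follows that `tr D ≥ 0`.
-/

open scoped InnerProductSpace ComplexOrder
open LinearMap

noncomputable section

/-- `A` is a derivation of `μ`. -/
def IsDer {n : ℕ} (μ : Vb n) (A : E n →ₗ[ℂ] E n) : Prop :=
  ∀ X Y, A (μ X Y) = μ (A X) Y + μ X (A Y)

def normSq {n : ℕ} (μ : Vb n) : ℝ :=
  ∑ i, ∑ j, ∑ k, ‖(⟪e n k, μ (e n i) (e n j)⟫_ℂ : ℂ)‖ ^ 2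

/-- The trace of an endomorphism in the standard basis. -/
lemma trace_eq_sum_e {n : ℕ} (A : E n →ₗ[ℂ] E n) :
    LinearMap.trace ℂ (E n) A = ∑ i, ⟪e n i, A (e n i)⟫_ℂ := by
  simpa [e] using LinearMap.trace_eq_sum_inner A (EuclideanSpace.basisFun (Fin n) ℂ)

/-- The sum `∑ ‖μ(e_i, e_j)‖²`, which equals `‖μ‖²`. -/
def sumSq {n : ℕ} (μ : Vb n) : ℝ := ∑ i, ∑ j, ‖μ (e n i) (e n j)‖ ^ 2

lemma sumSq_pos {n : ℕ} {μ : Vb n} (hμ : μ ≠ 0) : 0 < sumSq μ := by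
  have hnn : 0 ≤ sumSq μ := by unfold sumSq; positivity
  refine lt_of_le_of_ne hnn fun h => hμ ?_
  have h1 := (Finset.sum_eq_zero_iff_of_nonneg (fun i _ => by positivity)).1 h.symm
  refine (EuclideanSpace.basisFun (Fin n) ℂ).toBasis.ext fun i => ?_
  refine (EuclideanSpace.basisFun (Fin n) ℂ).toBasis.ext fun j => ?_
  have h2 := (Finset.sum_eq_zero_iff_of_nonneg (fun i _ => by positivity)).1
    (h1 i (Finset.mem_univ i)) j (Finset.mem_univ j)
  simpa [e] using h2

/-- The three terms of `tr(M_μ A)`, with the first one cycled so that every inner product is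
between products of `μ`. -/
lemma trace_Mmap_comp_s5 {n : ℕ} (μ : Vb n) (A : E n →ₗ[ℂ] E n) :
    LinearMap.trace ℂ (E n) (Mmap μ ∘ₗ A) =
      2 * ∑ i, ∑ j, (⟪μ (e n i) (e n j), A (μ (e n i) (e n j))⟫_ℂ
        - ⟪μ (e n i) (e n j), μ (e n i) (A (e n j))⟫_ℂ
        - ⟪μ (e n i) (e n j), μ (A (e n i)) (e n j)⟫_ℂ) := by
  have hL : ∀ i, LinearMap.trace ℂ (E n) ((Lop μ (e n i) ∘ₗ adjoint (Lop μ (e n i))) ∘ₗ A) =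
      ∑ j, ⟪μ (e n i) (e n j), A (μ (e n i) (e n j))⟫_ℂ := fun i => by
    rw [LinearMap.comp_assoc, LinearMap.trace_comp_comm', trace_eq_sum_e]
    simp [LinearMap.adjoint_inner_right, Lop]
  have hL' : ∀ i, LinearMap.trace ℂ (E n) ((adjoint (Lop μ (e n i)) ∘ₗ Lop μ (e n i)) ∘ₗ A) =
      ∑ j, ⟪μ (e n i) (e n j), μ (e n i) (A (e n j))⟫_ℂ := fun i => by
    rw [trace_eq_sum_e]
    simp [LinearMap.adjoint_inner_right, Lop]
  have hR : ∀ j, LinearMap.trace ℂ (E n) ((adjoint (Rop μ (e n j)) ∘ₗ Rop μ (e n j)) ∘ₗ A) =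
      ∑ i, ⟪μ (e n i) (e n j), μ (A (e n i)) (e n j)⟫_ℂ := fun j => by
    rw [trace_eq_sum_e]
    simp [LinearMap.adjoint_inner_right, Rop]
  simp only [Mmap, ← Module.End.mul_eq_comp,
    sub_mul, smul_mul_assoc, Finset.sum_mul, map_sub, map_smul, map_sum]
  simp only [Module.End.mul_eq_comp, hL, hL', hR, Finset.sum_sub_distrib, smul_eq_mul]
  rw [Finset.sum_comm (f := fun j i => ⟪μ (e n i) (e n j), μ (A (e n i)) (e n j)⟫_ℂ)]
  ring

lemma trace_Mmap_comp_of_isDer {n : ℕ} (μ : Vb n) {A : E n →ₗ[ℂ] E n} (hA : IsDer μ A) :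
    LinearMap.trace ℂ (E n) (Mmap μ ∘ₗ A) = 0 := by
  rw [trace_Mmap_comp_s5]
  simp only [hA _ _, inner_add_right]
  simp

lemma trace_Mmap {n : ℕ} (μ : Vb n) :
    LinearMap.trace ℂ (E n) (Mmap μ) = ((-(2 * sumSq μ) : ℝ) : ℂ) := by
  have h := trace_Mmap_comp_s5 μ LinearMap.id
  rw [LinearMap.comp_id] at h
  rw [h]
  simp [sumSq, inner_self_eq_norm_sq_to_K]

/-- If `0 ≠ μ ∈ V_n`, `M_μ = c·I + D` with `c ∈ ℝ`, `D ∈ Der(μ)`, and `tr(D) ≠ 0`, then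
`c = −tr(D²)/tr(D)` and `tr(D) > 0`. -/
theorem critical_c_value_of_traceD_ne_zero {n : ℕ} (μ : Vb n) (hμ : μ ≠ 0)
    (c : ℝ) (D : E n →ₗ[ℂ] E n) (hDer : IsDer μ D)
    (hM : Mmap μ = (c : ℂ) • (LinearMap.id : E n →ₗ[ℂ] E n) + D)
    (htr : LinearMap.trace ℂ (E n) D ≠ 0) :
    (c : ℂ) = -(LinearMap.trace ℂ (E n) (D ∘ₗ D)) / LinearMap.trace ℂ (E n) D ∧
    0 < LinearMap.trace ℂ (E n) D := by
  have h1 := trace_Mmap_comp_of_isDer μ hDer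
  have h2 := trace_Mmap μ
  have hadj : adjoint D = D := by
    have hD : D = Mmap μ - (c : ℂ) • LinearMap.id := by rw [hM]; abel
    rw [hD]
    rw [map_sub, map_smulₛₗ, Complex.conj_ofReal, adjoint_Mmap, LinearMap.adjoint_id]
  rw [hM, LinearMap.add_comp, LinearMap.smul_comp, LinearMap.id_comp, map_add, map_smul,
    smul_eq_mul] at h1
  rw [hM, map_add, map_smul, LinearMap.trace_id, smul_eq_mul, finrank_euclideanSpace_fin] at h2
  refine ⟨by rw [eq_div_iff htr]; linear_combination h1, ?_⟩
  have hsq : LinearMap.trace ℂ (E n) (D ∘ₗ D) = ((∑ i, ‖D (e n i)‖ ^ 2 : ℝ) : ℂ) := by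
    have : D ∘ₗ D = adjoint D ∘ₗ D := by rw [hadj]
    rw [this, trace_eq_sum_e]
    simp [LinearMap.adjoint_inner_right, inner_self_eq_norm_sq_to_K]
  have htrD : LinearMap.trace ℂ (E n) D = ((∑ i, (⟪e n i, D (e n i)⟫_ℂ).re : ℝ) : ℂ) := by
    rw [trace_eq_sum_e, Complex.ofReal_sum]
    refine Finset.sum_congr rfl fun i _ => ?_
    refine (Complex.conj_eq_iff_re.1 ?_).symm
    rw [inner_conj_symm, ← LinearMap.adjoint_inner_right, hadj]
  have hCS : (∑ i, (⟪e n i, D (e n i)⟫_ℂ).re) ^ 2 ≤ n * ∑ i, ‖D (e n i)‖ ^ 2 := by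
    refine (sq_sum_le_card_mul_sum_sq (s := Finset.univ)).trans ?_
    rw [Finset.card_univ, Fintype.card_fin]
    refine mul_le_mul_of_nonneg_left (Finset.sum_le_sum fun i _ => ?_) (Nat.cast_nonneg n)
    refine sq_le_sq' ?_ ?_ <;>
    · have := (Complex.abs_re_le_norm _).trans (norm_inner_le_norm (𝕜 := ℂ) (e n i) (D (e n i)))
      have he : ‖e n i‖ = 1 := by simp [e]
      rw [he, one_mul, abs_le] at this
      linarith
  rw [htrD] at h1 h2 htr ⊢
  rw [hsq] at h1
  generalize (∑ i, (⟪e n i, D (e n i)⟫_ℂ).re) = t at *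
  generalize (∑ i, ‖D (e n i)‖ ^ 2) = q at *
  norm_cast at h1 h2 htr ⊢
  have hS := sumSq_pos hμ
  have key : 2 * sumSq μ * t = n * q - t ^ 2 := by linear_combination t * h2 - (n : ℝ) * h1
  refine lt_of_le_of_ne ?_ (Ne.symm htr)
  by_contra! hneg
  nlinarith
end
end

section
/- Let μ ∈ V_n and let Z ∈ ℂ^n be central for μ, i.e., μ(Z,Y) = μ(Y,Z) = 0 for all Y ∈ ℂ^n. Then ⟨M_μ Z, Z⟩ = 2 Σ_{i,j} |⟨μ(e_i,e_j), Z⟩|² ≥ 0. Moreover, if μ ≠ 0, M_μ = c·I + D for some c ∈ ℝ and D ∈ Der(μ), and Z ≠ 0 is central with DZ = aZ for a ∈ ℝ, then a ≥ −c. -/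
/-!
For central `Z` the operators `L_{e_i}` and `R_{e_i}` kill `Z`, so only the first sum in `M_μ`
contributes to `M_μ Z`, and `⟨M_μ Z, Z⟩ = 2 Σ_i ‖L_{e_i}^* Z‖²`. Parseval's identity in the
standard basis (`norm_sq_eq_sum_inner_e`) turns this into the stated double sum. If moreover
`M_μ = c·I + D` and `D Z = a Z`, the same number equals `(c + a) ‖Z‖²`; as it is nonnegative
and `Z ≠ 0`, this forces `a ≥ -c`.
-/

open scoped InnerProductSpace ComplexOrder
open LinearMap

noncomputable section

/-- Parseval's identity for the standard basis. -/
lemma norm_sq_eq_sum_inner_e {n : ℕ} (v : E n) :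
    ‖v‖ ^ 2 = ∑ j, ‖(⟪e n j, v⟫_ℂ : ℂ)‖ ^ 2 := by
  simp [e, EuclideanSpace.norm_sq_eq, EuclideanSpace.inner_single_left]

lemma inner_self_eq_ofReal {n : ℕ} (v : E n) : (⟪v, v⟫_ℂ : ℂ) = ((‖v‖ ^ 2 : ℝ) : ℂ) := by
  rw [inner_self_eq_norm_sq_to_K]
  push_cast
  rfl

/-- If `Z` is central for `μ` then `⟨M_μ Z, Z⟩ = 2 Σ_{i,j} |⟨μ(e_i,e_j),Z⟩|² ≥ 0`;
moreover if `μ ≠ 0`, `M_μ = c·I + D` with `D ∈ Der(μ)`, and `0 ≠ Z` is central with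
`DZ = aZ`, `a ∈ ℝ`, then `a ≥ −c`. -/
theorem central_vector {n : ℕ} (μ : Vb n) (Z : E n)
    (hZ : ∀ Y : E n, μ Z Y = 0 ∧ μ Y Z = 0) :
    (⟪Mmap μ Z, Z⟫_ℂ : ℂ)
        = ((2 * ∑ i, ∑ j, ‖(⟪μ (e n i) (e n j), Z⟫_ℂ : ℂ)‖ ^ 2 : ℝ) : ℂ) ∧
    (0 : ℝ) ≤ 2 * ∑ i, ∑ j, ‖(⟪μ (e n i) (e n j), Z⟫_ℂ : ℂ)‖ ^ 2 ∧
    (∀ (c a : ℝ) (D : E n →ₗ[ℂ] E n), μ ≠ 0 → IsDer μ D →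
      Mmap μ = (c : ℂ) • (LinearMap.id : E n →ₗ[ℂ] E n) + D →
      Z ≠ 0 → D Z = (a : ℂ) • Z → -c ≤ a) := by
  have key : (⟪Mmap μ Z, Z⟫_ℂ : ℂ)
      = ((2 * ∑ i, ∑ j, ‖(⟪μ (e n i) (e n j), Z⟫_ℂ : ℂ)‖ ^ 2 : ℝ) : ℂ) := by
    have hM : Mmap μ Z = (2 : ℂ) • ∑ i, μ (e n i) (adjoint (μ (e n i)) Z) := by
      simp [Mmap, Lop, Rop, (hZ _).1, (hZ _).2]
    rw [hM, inner_smul_left, sum_inner]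
    push_cast
    simp only [map_ofNat]
    congr 1
    refine Finset.sum_congr rfl fun i _ => ?_
    rw [← LinearMap.adjoint_inner_right, inner_self_eq_ofReal,
      norm_sq_eq_sum_inner_e]
    simp [LinearMap.adjoint_inner_right]
  have nonneg : (0 : ℝ) ≤ 2 * ∑ i, ∑ j, ‖(⟪μ (e n i) (e n j), Z⟫_ℂ : ℂ)‖ ^ 2 := by
    positivity
  refine ⟨key, nonneg, ?_⟩
  intro c a D _ _ hMD hZ0 hD
  have hMZ : Mmap μ Z = ((c + a : ℝ) : ℂ) • Z := by
    rw [hMD]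
    simp [hD, add_smul]
  rw [hMZ, inner_smul_left, Complex.conj_ofReal, inner_self_eq_ofReal] at key
  have hreal : (c + a) * ‖Z‖ ^ 2
      = 2 * ∑ i, ∑ j, ‖(⟪μ (e n i) (e n j), Z⟫_ℂ : ℂ)‖ ^ 2 := by
    exact_mod_cast key
  rw [← hreal] at nonneg
  have := nonneg_of_mul_nonneg_left nonneg (by positivity : 0 < ‖Z‖ ^ 2)
  linarith
end
end

section
/- Let μ ∈ V_n be a left Leibniz algebra structure on ℂ^n such that M_μ is negative definite, i.e., ⟨M_μ X, X⟩ < 0 for every 0 ≠ X ∈ ℂ^n. Then μ is a semisimple Lie algebra: (a) μ is anticommutative, μ(X,Y) = −μ(Y,X) for all X,Y ∈ ℂ^n (hence μ satisfies the Jacobi identity and is a Lie bracket), and (b) every solvable ideal of μ is zero, where an ideal is a subspace I with μ(ℂ^n, I) ⊆ I and μ(I, ℂ^n) ⊆ I, and I is solvable if its derived series I^(0) = I, I^(k+1) = span(μ(I^(k), I^(k))) eventually vanishes. -/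
/-!
The whole proof rests on the fact that a bilinear map `μ` with `M_μ` negative definite has no
nonzero abelian ideal.  Given an ideal `I` with `μ(I, I) = 0`, choose an orthonormal basis `b` of
`ℂ^n` each of whose members lies in `I` or in `Iᗮ`, and sum `⟨M_μ b_k, b_k⟩` over those `b_k` lying
in `I`, i.e. take the trace of `M_μ` on `I`.  In structure constants, the positive term of the trace
is the total squared norm of the components of all products `μ(b_i, b_j)` along `I`, while the
negative terms are the squared norms of the products with `b_j ∈ I`, respectively `b_i ∈ I`.  Such
products lie in `I`, and no nonzero one has both factors in `I`, so the negative terms are dominated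
by the positive one and the trace is nonnegative; negative definiteness forces `I = 0`.

Anticommutativity follows because the span of the squares `μ(x, x)` is an ideal acting trivially
from the left.  The last nonzero term of the derived series of a solvable ideal is an abelian ideal,
so a nonzero solvable ideal cannot exist either.
-/

open scoped InnerProductSpace ComplexOrder
open LinearMap

noncomputable section

/-- `μ` is a left Leibniz algebra structure. -/
def IsLeftLeibniz {n : ℕ} (μ : Vb n) : Prop :=
  ∀ x y z : E n, μ x (μ y z) = μ (μ x y) z + μ y (μ x z)

/-- `μ` is a symmetric Leibniz algebra structure. -/
def IsSymLeibniz {n : ℕ} (μ : Vb n) : Prop :=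
  IsLeftLeibniz μ ∧ ∀ x y z : E n, μ (μ x y) z = μ (μ x z) y + μ x (μ y z)

/-- The span of all products `μ(x,y)` with `x ∈ P`, `y ∈ Q`. -/
def prodSpan {n : ℕ} (μ : Vb n) (P Q : Submodule ℂ (E n)) : Submodule ℂ (E n) :=
  Submodule.span ℂ (Set.image2 (fun x y => μ x y) (P : Set (E n)) (Q : Set (E n)))

/-- `I` is a (two-sided) ideal of `μ`. -/
def IsIdeal {n : ℕ} (μ : Vb n) (I : Submodule ℂ (E n)) : Prop :=
  (∀ (X : E n), ∀ Y ∈ I, μ X Y ∈ I) ∧ (∀ Y ∈ I, ∀ (X : E n), μ Y X ∈ I)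

/-- The derived series `I^(0) = I`, `I^(k+1) = span μ(I^(k), I^(k))`. -/
def derSeries {n : ℕ} (μ : Vb n) (I : Submodule ℂ (E n)) : ℕ → Submodule ℂ (E n) :=
  fun k => Nat.rec I (fun _ prev => prodSpan μ prev prev) k

lemma sum_normSq_inner_eq {n : ℕ} {ι : Type*} [Fintype ι] (b : OrthonormalBasis ι ℂ (E n))
    (A : E n →ₗ[ℂ] E n) (X : E n) :
    ∑ i, ‖(⟪A (b i), X⟫_ℂ : ℂ)‖ ^ 2 = ‖adjoint A X‖ ^ 2 := by
  rw [← b.sum_sq_norm_inner_right]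
  simp [LinearMap.adjoint_inner_right]

lemma sum_normSq_apply_eq_adjoint {n : ℕ} {ι κ : Type*} [Fintype ι] [Fintype κ]
    (b : OrthonormalBasis ι ℂ (E n)) (c : OrthonormalBasis κ ℂ (E n)) (A : E n →ₗ[ℂ] E n) :
    ∑ i, ‖A (b i)‖ ^ 2 = ∑ k, ‖adjoint A (c k)‖ ^ 2 :=
  calc ∑ i, ‖A (b i)‖ ^ 2 = ∑ i, ∑ k, ‖(⟪A (b i), c k⟫_ℂ : ℂ)‖ ^ 2 :=
        Finset.sum_congr rfl fun _ _ => (c.sum_sq_norm_inner_left _).symm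
    _ = ∑ k, ∑ i, ‖(⟪A (b i), c k⟫_ℂ : ℂ)‖ ^ 2 := Finset.sum_comm
    _ = ∑ k, ‖adjoint A (c k)‖ ^ 2 :=
        Finset.sum_congr rfl fun k _ => sum_normSq_inner_eq b A (c k)

/-- The Hilbert–Schmidt norm does not depend on the orthonormal basis. -/
lemma sum_normSq_apply_eq {n : ℕ} {ι κ : Type*} [Fintype ι] [Fintype κ]
    (b : OrthonormalBasis ι ℂ (E n)) (c : OrthonormalBasis κ ℂ (E n)) (A : E n →ₗ[ℂ] E n) :
    ∑ i, ‖A (b i)‖ ^ 2 = ∑ j, ‖A (c j)‖ ^ 2 :=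
  (sum_normSq_apply_eq_adjoint b c A).trans (sum_normSq_apply_eq_adjoint c c A).symm

/-- The quadratic form of `M_μ`, computed in an arbitrary orthonormal basis instead of the standard
one. -/
lemma re_inner_Mmap {n : ℕ} {ι : Type*} [Fintype ι] (μ : Vb n)
    (b : OrthonormalBasis ι ℂ (E n)) (X : E n) :
    (⟪Mmap μ X, X⟫_ℂ : ℂ).re =
      2 * ∑ i, ∑ j, ‖(⟪μ (b i) (b j), X⟫_ℂ : ℂ)‖ ^ 2
        - 2 * ∑ i, ‖μ (b i) X‖ ^ 2 - 2 * ∑ i, ‖μ X (b i)‖ ^ 2 := by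
  set s := EuclideanSpace.basisFun (Fin n) ℂ with hs
  have he : ∀ i, e n i = s i := by intro i; simp [hs, e]
  have h1 : ∑ i, ∑ j, ‖(⟪μ (b i) (b j), X⟫_ℂ : ℂ)‖ ^ 2
      = ∑ i, ‖adjoint (Lop μ (e n i)) X‖ ^ 2 := by
    simp_rw [he, ← sum_normSq_inner_eq b]
    rw [Finset.sum_comm, Finset.sum_comm (s := (Finset.univ : Finset (Fin n)))]
    refine Finset.sum_congr rfl fun j _ => ?_
    exact (sum_normSq_inner_eq b (μ.flip (b j)) X).trans
      (sum_normSq_inner_eq s (μ.flip (b j)) X).symm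
  have h2 : ∑ i, ‖μ (b i) X‖ ^ 2 = ∑ i, ‖Lop μ (e n i) X‖ ^ 2 := by
    simp_rw [he]
    exact sum_normSq_apply_eq b s (μ.flip X)
  have h3 : ∑ i, ‖μ X (b i)‖ ^ 2 = ∑ i, ‖Rop μ (e n i) X‖ ^ 2 := by
    simp_rw [he]
    exact sum_normSq_apply_eq b s (μ X)
  rw [h1, h2, h3]
  have key : (⟪Mmap μ X, X⟫_ℂ : ℂ) =
      ((2 * ∑ i, ‖adjoint (Lop μ (e n i)) X‖ ^ 2 - 2 * ∑ i, ‖Lop μ (e n i) X‖ ^ 2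
        - 2 * ∑ i, ‖Rop μ (e n i) X‖ ^ 2 : ℝ) : ℂ) := by
    have ha : ∀ A : E n →ₗ[ℂ] E n, (⟪A (adjoint A X), X⟫_ℂ : ℂ) = (‖adjoint A X‖ : ℂ) ^ 2 := by
      intro A
      rw [← LinearMap.adjoint_inner_right]
      exact inner_self_eq_norm_sq_to_K _
    have hb : ∀ A : E n →ₗ[ℂ] E n, (⟪adjoint A (A X), X⟫_ℂ : ℂ) = (‖A X‖ : ℂ) ^ 2 := by
      intro A
      rw [LinearMap.adjoint_inner_left]
      exact inner_self_eq_norm_sq_to_K _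
    simp [Mmap, ha, hb]
    ring
  rw [key, Complex.ofReal_re]

lemma exists_adapted_basis {n : ℕ} (I : Submodule ℂ (E n)) :
    ∃ (ι : Type) (_ : Fintype ι) (b : OrthonormalBasis ι ℂ (E n)),
      ∀ i, b i ∈ I ∨ b i ∈ Iᗮ := by
  have hfam := I.orthogonalFamily_self
  have hint : DirectSum.IsInternal (fun c : Bool => cond c I Iᗮ) := by
    rw [hfam.isInternal_iff, iSup_bool_eq]
    simpa using Submodule.sup_orthogonal_of_hasOrthogonalProjection
  refine ⟨_, inferInstance, hint.collectedOrthonormalBasis hfam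
    (fun c => stdOrthonormalBasis ℂ _), fun i => ?_⟩
  have hmem := hint.collectedOrthonormalBasis_mem hfam (fun c => stdOrthonormalBasis ℂ _) i
  obtain ⟨_ | _, _⟩ := i
  · exact Or.inr hmem
  · exact Or.inl hmem

lemma abelian_ideal_eq_bot {n : ℕ} (μ : Vb n)
    (hneg : ∀ X : E n, X ≠ 0 → (⟪Mmap μ X, X⟫_ℂ : ℂ) < 0)
    (I : Submodule ℂ (E n)) (hI : IsIdeal μ I) (hab : ∀ x ∈ I, ∀ y ∈ I, μ x y = 0) : I = ⊥ := by
  classical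
  obtain ⟨ι, _, b, hb⟩ := exists_adapted_basis I
  by_contra hne
  have hex : ∃ i, b i ∈ I := by
    by_contra! hno
    apply hne
    rw [Submodule.eq_bot_iff]
    intro x hx
    -- Otherwise every basis vector is orthogonal to `I`.
    have : ∀ i, (⟪b i, x⟫_ℂ : ℂ) = 0 := fun i =>
      Submodule.inner_left_of_mem_orthogonal hx ((hb i).resolve_left (hno i))
    rw [← b.sum_repr' x]
    simp [this]
  set s : Finset ι := Finset.univ.filter fun i => b i ∈ I with hs
  have hlt : ∑ k ∈ s, (⟪Mmap μ (b k), b k⟫_ℂ : ℂ).re < 0 := by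
    obtain ⟨i, hi⟩ := hex
    refine Finset.sum_neg (fun k _ => ?_) ⟨i, by simp [hs, hi]⟩
    exact (Complex.lt_def.1 (hneg _ (b.orthonormal.ne_zero k))).1
  -- The squared norm of the component of `μ (b i) (b j)` along `I`.
  set F : ι → ι → ℝ := fun i j => ∑ k ∈ s, ‖(⟪μ (b i) (b j), b k⟫_ℂ : ℂ)‖ ^ 2 with hF
  have hFn : ∀ i j, μ (b i) (b j) ∈ I → ‖μ (b i) (b j)‖ ^ 2 = F i j := by
    intro i j hij
    rw [← b.sum_sq_norm_inner_left]
    symm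
    refine Finset.sum_subset (Finset.subset_univ _) fun k _ hk => ?_
    have hk' : b k ∈ Iᗮ := (hb k).resolve_left (by simpa [hs] using hk)
    rw [Submodule.inner_right_of_mem_orthogonal hij hk']
    simp
  have h1 : ∑ k ∈ s, ∑ i, ∑ j, ‖(⟪μ (b i) (b j), b k⟫_ℂ : ℂ)‖ ^ 2 = ∑ i, ∑ j, F i j := by
    rw [Finset.sum_comm]
    refine Finset.sum_congr rfl fun i _ => Finset.sum_comm
  have h2 : ∑ k ∈ s, ∑ i, ‖μ (b i) (b k)‖ ^ 2 = ∑ i, ∑ j, if b j ∈ I then F i j else 0 := by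
    rw [Finset.sum_comm]
    refine Finset.sum_congr rfl fun i _ => ?_
    rw [hs, Finset.sum_filter]
    refine Finset.sum_congr rfl fun j _ => ?_
    split_ifs with hj
    · exact hFn _ _ (hI.1 _ _ hj)
    · rfl
  have h3 : ∑ k ∈ s, ∑ i, ‖μ (b k) (b i)‖ ^ 2 = ∑ i, ∑ j, if b i ∈ I then F i j else 0 := by
    rw [hs, Finset.sum_filter]
    refine Finset.sum_congr rfl fun i _ => ?_
    split_ifs with hi
    · exact Finset.sum_congr rfl fun j _ => hFn _ _ (hI.2 _ hi _)
    · simp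
  have hle : (∑ i, ∑ j, if b j ∈ I then F i j else 0) + (∑ i, ∑ j, if b i ∈ I then F i j else 0)
      ≤ ∑ i, ∑ j, F i j := by
    simp_rw [← Finset.sum_add_distrib]
    refine Finset.sum_le_sum fun i _ => Finset.sum_le_sum fun j _ => ?_
    have hF0 : 0 ≤ F i j := Finset.sum_nonneg fun _ _ => by positivity
    by_cases hi : b i ∈ I <;> by_cases hj : b j ∈ I
    · have : F i j = 0 := by simp [hF, hab _ hi _ hj]
      simp [this]
    all_goals simp [hi, hj, hF0]
  simp_rw [re_inner_Mmap μ b, Finset.sum_sub_distrib, ← Finset.mul_sum] at hlt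
  rw [h1, h2, h3] at hlt
  linarith

lemma left_square {n : ℕ} {μ : Vb n} (hleib : IsLeftLeibniz μ) (x z : E n) :
    μ (μ x x) z = 0 := by
  simpa using hleib x x z

/-- Polarization: `μ(x,y) + μ(y,x) = μ(x+y,x+y) - μ(x,x) - μ(y,y)`. -/
lemma add_swap_mem_span_squares {n : ℕ} (μ : Vb n) (x y : E n) :
    μ x y + μ y x ∈ Submodule.span ℂ (Set.range fun x => μ x x) := by
  have h : μ x y + μ y x = μ (x + y) (x + y) - μ x x - μ y y := by
    simp only [map_add, LinearMap.add_apply]; abel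
  rw [h]
  exact sub_mem (sub_mem (Submodule.subset_span ⟨_, rfl⟩) (Submodule.subset_span ⟨_, rfl⟩))
    (Submodule.subset_span ⟨_, rfl⟩)

lemma anticomm {n : ℕ} (μ : Vb n) (hleib : IsLeftLeibniz μ)
    (hneg : ∀ X : E n, X ≠ 0 → (⟪Mmap μ X, X⟫_ℂ : ℂ) < 0) (X Y : E n) : μ X Y = - μ Y X := by
  set S := Submodule.span ℂ (Set.range fun x => μ x x) with hS
  have hleft : ∀ x ∈ S, ∀ z, μ x z = 0 := by
    intro x hx z
    induction hx using Submodule.span_induction with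
    | mem x hx => obtain ⟨w, rfl⟩ := hx; exact left_square hleib w z
    | zero => simp
    | add x y _ _ hx hy => simp [hx, hy]
    | smul a x _ hx => simp [hx]
  have hideal : IsIdeal μ S := by
    refine ⟨fun y x hx => ?_, fun x hx z => by rw [hleft x hx z]; exact zero_mem _⟩
    induction hx using Submodule.span_induction with
    | mem x hx =>
      obtain ⟨w, rfl⟩ := hx
      simp only
      rw [hleib]
      exact add_swap_mem_span_squares μ _ _
    | zero => simp
    | add a b _ _ ha hb => rw [map_add]; exact add_mem ha hb
    | smul a x _ hx => rw [map_smul]; exact Submodule.smul_mem _ _ hx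
  have hbot := abelian_ideal_eq_bot μ hneg S hideal fun x hx y _ => hleft x hx y
  have := add_swap_mem_span_squares μ X Y
  rw [← hS, hbot, Submodule.mem_bot] at this
  exact eq_neg_of_add_eq_zero_left this

lemma isIdeal_prodSpan {n : ℕ} (μ : Vb n) (hleib : IsLeftLeibniz μ)
    (hanti : ∀ X Y : E n, μ X Y = - μ Y X) {I : Submodule ℂ (E n)} (hI : IsIdeal μ I) :
    IsIdeal μ (prodSpan μ I I) := by
  have hl : ∀ X, ∀ Y ∈ prodSpan μ I I, μ X Y ∈ prodSpan μ I I := by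
    intro X Y hY
    induction hY using Submodule.span_induction with
    | mem Y hY =>
      obtain ⟨a, ha, c, hc, rfl⟩ := hY
      simp only
      rw [hleib]
      exact add_mem (Submodule.subset_span ⟨_, hI.1 X a ha, c, hc, rfl⟩)
        (Submodule.subset_span ⟨a, ha, _, hI.1 X c hc, rfl⟩)
    | zero => simp
    | add a b _ _ ha hb => rw [map_add]; exact add_mem ha hb
    | smul a x _ hx => rw [map_smul]; exact Submodule.smul_mem _ _ hx
  exact ⟨hl, fun Y hY X => by rw [hanti]; exact neg_mem (hl X Y hY)⟩

/-- If `μ` is a left Leibniz structure with `M_μ` negative definite, then `μ` is a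
semisimple Lie algebra: it is anticommutative (hence satisfies the Jacobi identity)
and every solvable ideal is zero. -/
theorem negdef_semisimple {n : ℕ} (μ : Vb n)
    (hleib : IsLeftLeibniz μ)
    (hneg : ∀ X : E n, X ≠ 0 → (⟪Mmap μ X, X⟫_ℂ : ℂ) < 0) :
    (∀ X Y : E n, μ X Y = - μ Y X) ∧
    (∀ X Y Z : E n, μ (μ X Y) Z + μ (μ Y Z) X + μ (μ Z X) Y = 0) ∧
    (∀ I : Submodule ℂ (E n), IsIdeal μ I →
      (∃ k, derSeries μ I k = ⊥) → I = ⊥) := by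
  have hanti := anticomm μ hleib hneg
  refine ⟨hanti, fun X Y Z => ?_, fun I hI => ?_⟩
  · rw [hanti (μ Y Z) X, hleib X Y Z, hanti (μ Z X) Y, hanti Z X, map_neg]
    abel
  · rintro ⟨k, hk⟩
    have hid : ∀ k, IsIdeal μ (derSeries μ I k) := by
      intro k
      induction k with
      | zero => exact hI
      | succ k ih => exact isIdeal_prodSpan μ hleib hanti ih
    induction k with
    | zero => exact hk
    | succ k ih =>
      refine ih (abelian_ideal_eq_bot μ hneg _ (hid k) fun x hx y hy => ?_)
      have hmem : μ x y ∈ derSeries μ I (k + 1) := Submodule.subset_span ⟨x, hx, y, hy, rfl⟩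
      rwa [hk, Submodule.mem_bot] at hmem
end
end

section
/- Let μ ∈ V_2 be the bilinear map on ℂ² determined by μ(e₁,e₁) = e₂ and μ(e_i,e_j) = 0 for all other pairs of basis vectors. Then μ is a symmetric Leibniz algebra structure which is not anticommutative, M_μ = diag(−4, 2) = −10·I + diag(6, 12), the Hermitian operator diag(6, 12) is a derivation of μ (so [μ] is a critical point of the square norm of the moment map), and F₂([μ]) = tr(M_μ²)/‖μ‖⁴ = 20. -/
/-!
Write `e₁, e₂` for `e 2 0, e 2 1`. In coordinates the product is `μ(X, Y) = X₁ Y₁ e₂`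
(`mu_apply`), so it takes values in the line of `e₂`, which it annihilates on both sides: all
double products vanish and the Leibniz identities are trivial. An operator `diag(a, b)` is a
derivation exactly when `b = 2 a`, as for `diag(6, 12)`. The operators `L_{e₁} = R_{e₁}` are the
matrix unit sending `e₁` to `e₂`, and `L_{e₂} = R_{e₂} = 0`. Hence
`M_μ = 2 E₂₂ - 2 E₁₁ - 2 E₁₁ = diag(-4, 2)` (`Mmap_eq_diagonal`), whose square has trace `20`,
while `‖μ‖ = 1`.
-/

open scoped InnerProductSpace ComplexOrder
open LinearMap

noncomputable section

theorem mu_apply (μ : Vb 2)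
    (h00 : μ (e 2 0) (e 2 0) = e 2 1)
    (h01 : μ (e 2 0) (e 2 1) = 0)
    (h10 : μ (e 2 1) (e 2 0) = 0)
    (h11 : μ (e 2 1) (e 2 1) = 0) (X Y : E 2) :
    μ X Y = (X 0 * Y 0) • e 2 1 := by
  have hdec : ∀ Z : E 2, Z = Z 0 • e 2 0 + Z 1 • e 2 1 := by
    intro Z
    ext i
    fin_cases i <;> simp [e]
  conv_lhs => rw [hdec X, hdec Y]
  simp only [map_add, map_smul, LinearMap.add_apply, LinearMap.smul_apply, h00, h01, h10, h11,
    smul_zero, add_zero, smul_smul]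
  rw [mul_comm]

theorem Mmap_eq_diagonal (μ : Vb 2) (hμ : ∀ X Y : E 2, μ X Y = (X 0 * Y 0) • e 2 1) :
    Mmap μ = Matrix.toEuclideanLin (Matrix.diagonal ![(-4 : ℂ), 2]) := by
  have hL0 : Lop μ (e 2 0) = Matrix.toEuclideanLin !![(0 : ℂ), 0; 1, 0] := by
    ext X i
    fin_cases i <;> simp [Lop, hμ, e, Matrix.toLpLin_apply, dotProduct]
  have hR0 : Rop μ (e 2 0) = Matrix.toEuclideanLin !![(0 : ℂ), 0; 1, 0] := by
    ext X i
    fin_cases i <;> simp [Rop, hμ, e, Matrix.toLpLin_apply, dotProduct]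
  have hL1 : Lop μ (e 2 1) = 0 := by
    ext X i
    simp [Lop, hμ, e]
  have hR1 : Rop μ (e 2 1) = 0 := by
    ext X i
    simp [Rop, hμ, e]
  simp only [Mmap, Fin.sum_univ_two, hL0, hR0, hL1, hR1,
    ← Matrix.toEuclideanLin_conjTranspose_eq_adjoint, LinearMap.zero_comp, LinearMap.comp_zero,
    add_zero]
  ext X i
  fin_cases i <;>
    simp [Matrix.toLpLin_apply, dotProduct, Matrix.conjTranspose_apply,
      Matrix.diagonal]
  ring

/-- The two-dimensional non-Lie symmetric Leibniz algebra `μ(e₁,e₁) = e₂` is a critical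
point of `F₂` of critical value `20`: `M_μ = diag(−4,2) = −10·I + diag(6,12)` with
`diag(6,12)` a derivation of `μ`. -/
theorem twoDim_nonLie_critical (μ : Vb 2)
    (h00 : μ (e 2 0) (e 2 0) = e 2 1)
    (h01 : μ (e 2 0) (e 2 1) = 0)
    (h10 : μ (e 2 1) (e 2 0) = 0)
    (h11 : μ (e 2 1) (e 2 1) = 0) :
    IsSymLeibniz μ ∧
    ¬ (∀ X Y : E 2, μ X Y = - μ Y X) ∧
    Mmap μ = Matrix.toEuclideanLin (Matrix.diagonal ![(-4 : ℂ), 2]) ∧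
    Mmap μ = (-10 : ℂ) • (LinearMap.id : E 2 →ₗ[ℂ] E 2)
      + Matrix.toEuclideanLin (Matrix.diagonal ![(6 : ℂ), 12]) ∧
    IsDer μ (Matrix.toEuclideanLin (Matrix.diagonal ![(6 : ℂ), 12])) ∧
    LinearMap.trace ℂ (E 2) (Mmap μ ∘ₗ Mmap μ) / ((normSq μ : ℂ)) ^ 2 = 20 := by
  have hμ := mu_apply μ h00 h01 h10 h11
  have hM := Mmap_eq_diagonal μ hμ
  refine ⟨⟨?_, ?_⟩, ?_, hM, ?_, ?_, ?_⟩
  · intro x y z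
    simp [hμ, e]
  · intro x y z
    simp [hμ, e]
  · intro h
    have := congrArg (fun v : E 2 => v 1) (h (e 2 0) (e 2 0))
    norm_num [hμ, e] at this
  · rw [hM]
    ext X i
    fin_cases i <;>
      simp [Matrix.toLpLin_apply] <;> ring
  · intro X Y
    rw [hμ, hμ, hμ]
    ext i
    fin_cases i <;>
      simp [Matrix.toLpLin_apply, e]
    ring
  · have hn : normSq μ = 1 := by
      simp [normSq, Fin.sum_univ_two, hμ, e, PiLp.inner_apply]
    rw [hM, hn, LinearMap.trace_eq_sum_inner _ (EuclideanSpace.basisFun (Fin 2) ℂ)]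
    simp [Fin.sum_univ_two, Matrix.toLpLin_apply, PiLp.inner_apply]
    norm_num
end
end

section
/- Let μ ∈ V_2 be the bilinear map on ℂ² determined by μ(e₁,e₂) = e₂ and μ(e_i,e_j) = 0 for all other pairs of basis vectors. Then μ is a left Leibniz algebra structure that is not a symmetric Leibniz algebra structure, M_μ = diag(−2, 0) = −2·I + diag(0, 2), and the Hermitian operator diag(0, 2) is a derivation of μ; hence [μ] is a critical point of the square norm of the moment map F₂ which does not lie in the variety of symmetric Leibniz algebras. -/
/-!
In coordinates `μ(x, y) = x₁ y₂ e₂`, from which the Leibniz identity and the derivation property are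
immediate, and the right Leibniz identity fails on `(e₁, e₁, e₂)`. The multiplication operators are
`L_{e₁} = E₂₂`, `L_{e₂} = 0`, `R_{e₁} = 0`, `R_{e₂} = E₂₁` (matrix units), so
`M_μ = 2 E₂₂ - 2 E₂₂ - 2 E₁₁ = diag(-2, 0)`.
-/

open scoped InnerProductSpace ComplexOrder
open LinearMap

noncomputable section

/-- A bilinear map on `ℂ²` whose only nonzero product of basis vectors is `μ(e₁, e₂) = e₂` is given
in coordinates by `μ(x, y) = x₁ y₂ e₂`. -/
theorem mul_eq_of_basis (μ : Vb 2)
    (h01 : μ (e 2 0) (e 2 1) = e 2 1)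
    (h00 : μ (e 2 0) (e 2 0) = 0)
    (h10 : μ (e 2 1) (e 2 0) = 0)
    (h11 : μ (e 2 1) (e 2 1) = 0) (x y : E 2) :
    μ x y = (x 0 * y 1) • e 2 1 := by
  have decomp : ∀ v : E 2, v = v 0 • e 2 0 + v 1 • e 2 1 := by
    intro v
    ext i
    fin_cases i <;> simp [e]
  conv_lhs => rw [decomp x, decomp y]
  simp [h01, h00, h10, h11, smul_smul, mul_comm]

/-- The two-dimensional non-symmetric left Leibniz algebra `μ(e₁,e₂) = e₂` is a critical
point of `F₂` not lying in the variety of symmetric Leibniz algebras: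
`M_μ = diag(−2,0) = −2·I + diag(0,2)` with `diag(0,2)` a derivation of `μ`. -/
theorem nonSymmetric_critical (μ : Vb 2)
    (h01 : μ (e 2 0) (e 2 1) = e 2 1)
    (h00 : μ (e 2 0) (e 2 0) = 0)
    (h10 : μ (e 2 1) (e 2 0) = 0)
    (h11 : μ (e 2 1) (e 2 1) = 0) :
    IsLeftLeibniz μ ∧
    ¬ IsSymLeibniz μ ∧
    Mmap μ = Matrix.toEuclideanLin (Matrix.diagonal ![(-2 : ℂ), 0]) ∧
    Mmap μ = (-2 : ℂ) • (LinearMap.id : E 2 →ₗ[ℂ] E 2)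
      + Matrix.toEuclideanLin (Matrix.diagonal ![(0 : ℂ), 2]) ∧
    IsDer μ (Matrix.toEuclideanLin (Matrix.diagonal ![(0 : ℂ), 2])) := by
  have hμ := mul_eq_of_basis μ h01 h00 h10 h11
  have hL0 : Lop μ (e 2 0) = Matrix.toEuclideanLin !![(0 : ℂ), 0; 0, 1] := by
    ext v i
    fin_cases i <;> simp [Lop, hμ, e, Matrix.toLpLin_apply, Matrix.mulVec, dotProduct]
  have hL1 : Lop μ (e 2 1) = 0 := by
    ext v i
    simp [Lop, hμ, e]
  have hR0 : Rop μ (e 2 0) = 0 := by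
    ext v i
    simp [Rop, hμ, e]
  have hR1 : Rop μ (e 2 1) = Matrix.toEuclideanLin !![(0 : ℂ), 0; 1, 0] := by
    ext v i
    fin_cases i <;> simp [Rop, hμ, e, Matrix.toLpLin_apply, Matrix.mulVec, dotProduct]
  have hM : Mmap μ = Matrix.toEuclideanLin (Matrix.diagonal ![(-2 : ℂ), 0]) := by
    simp only [Mmap, Fin.sum_univ_two, hL0, hL1, hR0, hR1,
      ← Matrix.toEuclideanLin_conjTranspose_eq_adjoint, map_zero]
    ext v i
    fin_cases i <;>
      simp [Matrix.toLpLin_apply, Matrix.mulVec, dotProduct, Matrix.diagonal,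
        Matrix.conjTranspose_apply]
  refine ⟨?_, ?_, hM, ?_, ?_⟩
  · intro x y z
    ext i
    fin_cases i <;> simp [hμ, e]
    ring
  · rintro ⟨-, h⟩
    have h1 := congrArg (fun v : E 2 => v 1) (h (e 2 0) (e 2 0) (e 2 1))
    simp [hμ, e] at h1
  · rw [hM]
    ext v i
    fin_cases i <;> simp [Matrix.toLpLin_apply, Matrix.mulVec, dotProduct, Matrix.diagonal]
  · intro x y
    ext i
    fin_cases i <;> simp [hμ, e, Matrix.toLpLin_apply, Matrix.mulVec, dotProduct, Matrix.diagonal]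
    ring
end
end
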